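/- arXiv:1812.11378 — 3 statements merged into one kernel-verified Lean document; each statement's English description precedes it below -/
import Mathlib

section
/- Fix h ∈ 𝔥. The map A ↦ (Im A, A(h)) is a bijection from the set of self-adjoint idempotents on 𝔥 onto Reg(𝔥)_h which is an order isomorphism, where self-adjoint idempotents are ordered by A₁ ≤ A₂ iff A₂A₁ = A₁ and A₂(A₁h) = A₁h = A₁(A₂h), and Reg(𝔥)_h is ordered by (𝔥',h') ≤ (𝔥'',h'') iff 𝔥' ⊆ 𝔥'' and P_{𝔥''}(h') = h' = P_{𝔥'}(h''); moreover this bijection is equivariant for the actions of O(𝔥)_h given by σ·A = σ∘A∘σ⁻¹ on idempotents and σ·(𝔥',h') = (σ(𝔥'), σ(h')) on Reg(𝔥)_h. -/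
/-- A subspace `W` is regular if the restriction of the bilinear form `B` to `W`
is nondegenerate. -/
def IsRegularSubspace {V : Type*} [AddCommGroup V] [Module ℂ V]
    (B : LinearMap.BilinForm ℂ V) (W : Submodule ℂ V) : Prop :=
  ∀ x ∈ W, (∀ y ∈ W, B x y = 0) → x = 0

/-- `IsOrthProj B W x y` : `y` is the orthogonal projection `P_W(x)` of `x` onto `W`. -/
def IsOrthProj {V : Type*} [AddCommGroup V] [Module ℂ V]
    (B : LinearMap.BilinForm ℂ V) (W : Submodule ℂ V) (x y : V) : Prop :=
  y ∈ W ∧ ∀ w ∈ W, B (x - y) w = 0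

/-- the map `A ↦ (Im A, A(h))` is an order isomorphism from the
self-adjoint idempotents on `𝔥` (ordered by `A₁ ≤ A₂ ↔ A₂A₁ = A₁ ∧
A₂(A₁h) = A₁h = A₁(A₂h)`) onto `Reg(𝔥)_h` (ordered by `(𝔥',h') ≤ (𝔥'',h'') ↔
𝔥' ⊆ 𝔥'' ∧ P_{𝔥''}(h') = h' = P_{𝔥'}(h'')`), equivariant for the actions of
`O(𝔥)_h` given by `σ·A = σ∘A∘σ⁻¹` and `σ·(𝔥',h') = (σ(𝔥'), σ(h'))`. -/
theorem selfAdjoint_idempotents_orderIso_reg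
    {V : Type*} [AddCommGroup V] [Module ℂ V] [FiniteDimensional ℂ V]
    (B : LinearMap.BilinForm ℂ V)
    (hsymm : ∀ x y, B x y = B y x) (hnd : B.Nondegenerate) (h : V) :
    -- (a) the map lands in Reg(𝔥)_h
    (∀ A : V →ₗ[ℂ] V, A ∘ₗ A = A → (∀ u v, B (A u) v = B u (A v)) →
      IsRegularSubspace B (LinearMap.range A) ∧
      IsOrthProj B (LinearMap.range A) h (A h)) ∧
    -- (b) injectivity
    (∀ A₁ A₂ : V →ₗ[ℂ] V,
      A₁ ∘ₗ A₁ = A₁ → (∀ u v, B (A₁ u) v = B u (A₁ v)) →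
      A₂ ∘ₗ A₂ = A₂ → (∀ u v, B (A₂ u) v = B u (A₂ v)) →
      LinearMap.range A₁ = LinearMap.range A₂ → A₁ h = A₂ h → A₁ = A₂) ∧
    -- (c) surjectivity onto Reg(𝔥)_h
    (∀ (W : Submodule ℂ V) (h' : V), IsRegularSubspace B W → IsOrthProj B W h h' →
      ∃ A : V →ₗ[ℂ] V, A ∘ₗ A = A ∧ (∀ u v, B (A u) v = B u (A v)) ∧
        LinearMap.range A = W ∧ A h = h') ∧
    -- (d) order isomorphism
    (∀ A₁ A₂ : V →ₗ[ℂ] V,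
      A₁ ∘ₗ A₁ = A₁ → (∀ u v, B (A₁ u) v = B u (A₁ v)) →
      A₂ ∘ₗ A₂ = A₂ → (∀ u v, B (A₂ u) v = B u (A₂ v)) →
      ((A₂ ∘ₗ A₁ = A₁ ∧ A₂ (A₁ h) = A₁ h ∧ A₁ (A₂ h) = A₁ h) ↔
        (LinearMap.range A₁ ≤ LinearMap.range A₂ ∧
          IsOrthProj B (LinearMap.range A₂) (A₁ h) (A₁ h) ∧
          IsOrthProj B (LinearMap.range A₁) (A₂ h) (A₁ h)))) ∧
    -- (e) O(𝔥)_h-equivariance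
    (∀ σ : V ≃ₗ[ℂ] V, (∀ x y, B (σ x) (σ y) = B x y) → σ h = h →
      ∀ A : V →ₗ[ℂ] V, A ∘ₗ A = A → (∀ u v, B (A u) v = B u (A v)) →
        ((σ : V →ₗ[ℂ] V) ∘ₗ A ∘ₗ (σ.symm : V →ₗ[ℂ] V)) ∘ₗ
            ((σ : V →ₗ[ℂ] V) ∘ₗ A ∘ₗ (σ.symm : V →ₗ[ℂ] V)) =
          (σ : V →ₗ[ℂ] V) ∘ₗ A ∘ₗ (σ.symm : V →ₗ[ℂ] V) ∧
        (∀ u v, B (((σ : V →ₗ[ℂ] V) ∘ₗ A ∘ₗ (σ.symm : V →ₗ[ℂ] V)) u) v =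
          B u (((σ : V →ₗ[ℂ] V) ∘ₗ A ∘ₗ (σ.symm : V →ₗ[ℂ] V)) v)) ∧
        LinearMap.range ((σ : V →ₗ[ℂ] V) ∘ₗ A ∘ₗ (σ.symm : V →ₗ[ℂ] V)) =
          (LinearMap.range A).map (σ : V →ₗ[ℂ] V) ∧
        ((σ : V →ₗ[ℂ] V) ∘ₗ A ∘ₗ (σ.symm : V →ₗ[ℂ] V)) h = σ (A h)) := by
  have key : ∀ A : V →ₗ[ℂ] V, A ∘ₗ A = A → ∀ x, A (A x) = A x :=
    fun A hA x => LinearMap.congr_fun hA x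
  have eqz : ∀ x y : V, (∀ v, B x v = B y v) → x = y := by
    intro x y hxy
    have hx : B x = B y := LinearMap.ext hxy
    have h0 : x - y = 0 := hnd.1 (x - y) (fun v => by rw [map_sub, hx, sub_self]; rfl)
    exact sub_eq_zero.mp h0
  refine ⟨?_, ?_, ?_, ?_, ?_⟩
  · intro A hA hs
    have hA := key A hA
    refine ⟨?_, ⟨h, rfl⟩, ?_⟩
    · rintro _ ⟨x, rfl⟩ hx
      apply eqz
      intro v
      rw [← hA x, hs, hx _ ⟨v, rfl⟩]
      simp
    · rintro _ ⟨w, rfl⟩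
      rw [← hs, map_sub, hA, sub_self]
      simp
  · intro A₁ A₂ h1 s1 h2 s2 hr _
    have h1 := key _ h1
    have h2 := key _ h2
    have a : ∀ x, A₂ (A₁ x) = A₁ x := by
      intro x
      obtain ⟨y, hy⟩ : A₁ x ∈ LinearMap.range A₂ := hr ▸ ⟨x, rfl⟩
      rw [← hy, h2]
    have b : ∀ x, A₁ (A₂ x) = A₂ x := by
      intro x
      obtain ⟨y, hy⟩ : A₂ x ∈ LinearMap.range A₁ := hr ▸ ⟨x, rfl⟩
      rw [← hy, h1]
    ext x
    apply eqz
    intro v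
    rw [s1, ← a v, ← s2, ← b x, s1, h1, ← s1, b]
  · intro W h' hW hp
    let f : W →ₗ[ℂ] Module.Dual ℂ W := (LinearMap.dualMap W.subtype) ∘ₗ B ∘ₗ W.subtype
    have hf : Function.Injective f := by
      rw [injective_iff_map_eq_zero]
      intro x hx
      apply Subtype.ext
      exact hW x x.2 (fun y hy => LinearMap.congr_fun hx ⟨y, hy⟩)
    let e : W ≃ₗ[ℂ] Module.Dual ℂ W :=
      LinearEquiv.ofInjectiveOfFinrankEq f hf Subspace.dual_finrank_eq.symm
    let A : V →ₗ[ℂ] V := W.subtype ∘ₗ (e.symm : Module.Dual ℂ W →ₗ[ℂ] W) ∘ₗ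
      (LinearMap.dualMap W.subtype) ∘ₗ B
    have m : ∀ u, A u ∈ W := fun u => Subtype.property _
    have p : ∀ u, ∀ w ∈ W, B (A u) w = B u w := by
      intro u w hw
      have := e.apply_symm_apply ((LinearMap.dualMap W.subtype) (B u))
      exact LinearMap.congr_fun this ⟨w, hw⟩
    have uq : ∀ u, ∀ y ∈ W, (∀ w ∈ W, B (u - y) w = 0) → A u = y := by
      intro u y hy hu
      apply sub_eq_zero.mp
      apply hW _ (W.sub_mem (m u) hy)
      intro w hw
      have := hu w hw
      rw [map_sub, LinearMap.sub_apply] at this ⊢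
      rw [p u w hw, this]
    have fx : ∀ u ∈ W, A u = u := fun u hu => uq u u hu (by simp)
    refine ⟨A, ?_, ?_, ?_, uq h h' hp.1 hp.2⟩
    · ext x
      exact fx _ (m x)
    · intro u v
      rw [← p u _ (m v), hsymm, ← p v _ (m u), hsymm]
    · apply le_antisymm
      · rintro _ ⟨x, rfl⟩
        exact m x
      · intro x hx
        exact ⟨x, fx x hx⟩
  · intro A₁ A₂ h1 s1 h2 s2
    have h1 := key _ h1
    have h2 := key _ h2
    constructor
    · rintro ⟨c, d, e⟩
      refine ⟨?_, ⟨⟨_, d⟩, by simp⟩, ⟨⟨h, rfl⟩, ?_⟩⟩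
      · rintro _ ⟨x, rfl⟩
        exact ⟨A₁ x, LinearMap.congr_fun c x⟩
      · rintro _ ⟨w, rfl⟩
        rw [← s1, map_sub, e, h1, sub_self]
        simp
    · rintro ⟨c, -, -⟩
      have a : ∀ x, A₂ (A₁ x) = A₁ x := by
        intro x
        obtain ⟨y, hy⟩ := c ⟨x, rfl⟩
        rw [← hy, h2]
      refine ⟨LinearMap.ext a, a h, ?_⟩
      apply eqz
      intro v
      rw [s1, s2, a, s1]
  · intro σ hσ hh A hA hs
    have hA := key A hA
    have hh' : σ.symm h = h := by rw [LinearEquiv.symm_apply_eq, hh]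
    refine ⟨?_, ?_, ?_, ?_⟩
    · ext x
      simp [hA]
    · intro u v
      obtain ⟨u, rfl⟩ := σ.surjective u
      obtain ⟨v, rfl⟩ := σ.surjective v
      simp [hσ, hs]
    · ext y
      constructor
      · rintro ⟨x, rfl⟩
        exact ⟨A (σ.symm x), ⟨_, rfl⟩, rfl⟩
      · rintro ⟨_, ⟨x, rfl⟩, rfl⟩
        exact ⟨σ x, by simp⟩
    · simp [hh']
end

section
/- Fix h ∈ 𝔥. Let 𝔥' and 𝔥'' be regular subspaces of 𝔥 with h ∈ 𝔥' and h ∈ 𝔥''. Then there exists σ ∈ O(𝔥) with σ(h) = h and σ(𝔥') = 𝔥'' if and only if dim 𝔥' = dim 𝔥''. -/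
theorem aux_isometry {M N : Type*} [AddCommGroup M] [Module ℂ M] [FiniteDimensional ℂ M]
    [AddCommGroup N] [Module ℂ N] [FiniteDimensional ℂ N]
    (B : LinearMap.BilinForm ℂ M) (C : LinearMap.BilinForm ℂ N)
    (hB : ∀ x y, B x y = B y x) (hC : ∀ x y, C x y = C y x)
    (nB : ∀ x, (∀ y, B x y = 0) → x = 0) (nC : ∀ x, (∀ y, C x y = 0) → x = 0)
    (hd : Module.finrank ℂ M = Module.finrank ℂ N) :
    ∃ φ : M ≃ₗ[ℂ] N, ∀ x y, C (φ x) (φ y) = B x y := by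
  have h1 : QuadraticMap.Equivalent (LinearMap.BilinMap.toQuadraticMap B)
      (QuadraticMap.weightedSumSquares ℂ (1 : Fin (Module.finrank ℂ M) → ℂ)) := by
    apply QuadraticForm.equivalent_weightedSumSquares_of_isAlgClosed
    rw [QuadraticMap.associated_left_inverse ℂ hB]
    exact nB
  have h2 : QuadraticMap.Equivalent (LinearMap.BilinMap.toQuadraticMap C)
      (QuadraticMap.weightedSumSquares ℂ (1 : Fin (Module.finrank ℂ N) → ℂ)) := by
    apply QuadraticForm.equivalent_weightedSumSquares_of_isAlgClosed
    rw [QuadraticMap.associated_left_inverse ℂ hC]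
    exact nC
  rw [← hd] at h2
  obtain ⟨e⟩ := h1.trans h2.symm
  have hq : ∀ x, C (e.toLinearEquiv x) (e.toLinearEquiv x) = B x x := fun x => e.map_app x
  refine ⟨e.toLinearEquiv, fun x y => ?_⟩
  have h3 := hq (x + y)
  simp only [map_add, LinearMap.add_apply] at h3
  have h4 := hC (e.toLinearEquiv x) (e.toLinearEquiv y)
  have h5 := hB x y
  have h6 := hq x
  have h7 := hq y
  linear_combination (1/2 : ℂ) * (h3 - h6 - h7 + h4 - h5)

theorem aux_refl {M : Type*} [AddCommGroup M] [Module ℂ M]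
    (B : LinearMap.BilinForm ℂ M)
    (hB : ∀ x y, B x y = B y x) (u v : M) (huv : B u u = B v v) (hne : B (u - v) (u - v) ≠ 0) :
    ∃ τ : M ≃ₗ[ℂ] M, (∀ x y, B (τ x) (τ y) = B x y) ∧ τ u = v := by
  obtain ⟨a, ha⟩ : ∃ a, a = u - v := ⟨_, rfl⟩
  rw [← ha] at hne
  let r : M →ₗ[ℂ] M := LinearMap.id - (2 / B a a) • (B a).smulRight a
  have hr : ∀ x, r x = x - (2 / B a a * B a x) • a := by
    intro x
    simp [r, mul_smul]
  have hinv : Function.Involutive r := by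
    intro x
    rw [hr, hr]
    simp only [map_sub, map_smul, smul_eq_mul]
    rw [sub_sub, ← add_smul]
    have : 2 / B a a * B a x + 2 / B a a * (B a x - 2 / B a a * B a x * B a a) = 0 := by
      field_simp
      ring
    rw [this, zero_smul, sub_zero]
  refine ⟨LinearEquiv.ofInvolutive r hinv, fun x y => ?_, ?_⟩
  · simp only [LinearEquiv.coe_ofInvolutive]
    rw [hr, hr]
    simp only [map_sub, map_smul, smul_eq_mul, LinearMap.sub_apply, LinearMap.smul_apply]
    rw [hB x a]
    field_simp
    ring
  · simp only [LinearEquiv.coe_ofInvolutive]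
    rw [hr]
    have : 2 / B a a * B a u = 1 := by
      have h1 : 2 * B a u = B a a := by
        rw [ha]
        simp only [map_sub, LinearMap.sub_apply]
        rw [hB v u]
        linear_combination huv
      field_simp
      exact h1
    rw [this, one_smul, ha]
    abel

theorem aux_trans {M : Type*} [AddCommGroup M] [Module ℂ M]
    (B : LinearMap.BilinForm ℂ M)
    (hB : ∀ x y, B x y = B y x) (nB : ∀ x, (∀ y, B x y = 0) → x = 0)
    (u v : M) (hu : u ≠ 0) (hv : v ≠ 0) (huv : B u u = B v v) :
    ∃ τ : M ≃ₗ[ℂ] M, (∀ x y, B (τ x) (τ y) = B x y) ∧ τ u = v := by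
  by_cases h1 : B (u - v) (u - v) = 0
  swap
  · exact aux_refl B hB u v huv h1
  by_cases h2 : B (u - -v) (u - -v) = 0
  swap
  · obtain ⟨τ, ht, hτ⟩ := aux_refl B hB u (-v) (by simpa using huv) h2
    refine ⟨τ.trans (LinearEquiv.neg ℂ), fun x y => ?_, ?_⟩
    · simp [ht]
    · simp [hτ]
  simp only [map_sub, map_neg, LinearMap.sub_apply, LinearMap.neg_apply] at h1 h2
  rw [hB v u] at h1 h2
  have huu : B u u = 0 := by linear_combination (1/4 : ℂ) * (h1 + h2) + (1/2 : ℂ) * huv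
  have hvv : B v v = 0 := by rw [← huv, huu]
  have huv0 : B u v = 0 := by linear_combination (1/4 : ℂ) * (h2 - h1)
  obtain ⟨x, hx1, hx2⟩ : ∃ x, B u x ≠ 0 ∧ B v x ≠ 0 := by
    obtain ⟨y, hy⟩ : ∃ y, B u y ≠ 0 := by
      by_contra! hc
      exact hu (nB u hc)
    obtain ⟨z, hz⟩ : ∃ y, B v y ≠ 0 := by
      by_contra! hc
      exact hv (nB v hc)
    by_cases hy2 : B v y = 0
    · by_cases hz2 : B u z = 0
      · exact ⟨y + z, by simpa [hz2] using hy, by simpa [hy2] using hz⟩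
      · exact ⟨z, hz2, hz⟩
    · exact ⟨y, hy, hy2⟩
  obtain ⟨w, hw⟩ : ∃ w, w = x - (B x x / (2 * B u x)) • u := ⟨_, rfl⟩
  have hww : B w w = 0 := by
    rw [hw]
    simp only [map_sub, map_smul, smul_eq_mul, LinearMap.sub_apply, LinearMap.smul_apply]
    rw [hB x u, huu]
    field_simp
    ring
  have huw : B u w ≠ 0 := by
    rw [hw]
    simpa [huu] using hx1
  have hvw : B v w ≠ 0 := by
    rw [hw]
    simpa [hB v u, huv0] using hx2
  obtain ⟨τ, ht, hτ⟩ := aux_refl B hB u w (by rw [huu, hww]) (by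
    simp only [map_sub, LinearMap.sub_apply]
    rw [hB w u, huu, hww]
    intro hc
    apply huw
    linear_combination (-1/2 : ℂ) * hc)
  obtain ⟨τ', ht', hτ'⟩ := aux_refl B hB w v (by rw [hvv, hww]) (by
    simp only [map_sub, LinearMap.sub_apply]
    rw [hB w v, hvv, hww]
    intro hc
    apply hvw
    linear_combination (-1/2 : ℂ) * hc)
  exact ⟨τ.trans τ', fun x y => by simp [ht, ht'], by simp [hτ, hτ']⟩

theorem aux_compl {V : Type*} [AddCommGroup V] [Module ℂ V] [FiniteDimensional ℂ V]
    (B : LinearMap.BilinForm ℂ V)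
    (hsymm : ∀ x y, B x y = B y x) (hnd : B.Nondegenerate) (W : Submodule ℂ V)
    (hW : IsRegularSubspace B W) :
    IsCompl W (B.orthogonal W) ∧
      ∀ x : B.orthogonal W, (∀ y, B.restrict (B.orthogonal W) x y = 0) → x = 0 := by
  have hr : B.IsRefl := fun x y h => by rw [hsymm, h]
  have hc : IsCompl W (B.orthogonal W) := by
    rw [LinearMap.BilinForm.isCompl_orthogonal_iff_disjoint hr, Submodule.disjoint_def]
    intro x hx hx'
    exact hW x hx fun y hy => by rw [hsymm]; exact hx' y hy
  refine ⟨hc, fun x hx => ?_⟩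
  apply Subtype.ext
  apply hnd.1
  intro y
  have hy : y ∈ W ⊔ B.orthogonal W := by rw [hc.sup_eq_top]; trivial
  obtain ⟨a, ha, b, hb, rfl⟩ := Submodule.mem_sup.1 hy
  rw [map_add, hsymm _ a]
  have h1 : B a x = 0 := x.2 a ha
  have h2 : B x b = 0 := hx ⟨b, hb⟩
  rw [h1, h2, add_zero]

/-- for regular subspaces `𝔥', 𝔥''` both containing `h`, some element
of `O(𝔥)` fixing `h` maps `𝔥'` onto `𝔥''` iff `dim 𝔥' = dim 𝔥''`. -/
theorem stabilizer_orbit_of_regular_containing_h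
    {V : Type*} [AddCommGroup V] [Module ℂ V] [FiniteDimensional ℂ V]
    (B : LinearMap.BilinForm ℂ V)
    (hsymm : ∀ x y, B x y = B y x) (hnd : B.Nondegenerate)
    (h : V) (W W' : Submodule ℂ V)
    (hW : IsRegularSubspace B W) (hW' : IsRegularSubspace B W')
    (hhW : h ∈ W) (hhW' : h ∈ W') :
    (∃ σ : V ≃ₗ[ℂ] V, (∀ x y, B (σ x) (σ y) = B x y) ∧ σ h = h ∧
        W.map (σ : V →ₗ[ℂ] V) = W') ↔
      Module.finrank ℂ W = Module.finrank ℂ W' := by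
  constructor
  · rintro ⟨σ, -, -, rfl⟩
    exact (σ.finrank_map_eq W).symm
  intro hd
  obtain ⟨hc, hn⟩ := aux_compl B hsymm hnd W hW
  obtain ⟨hc', hn'⟩ := aux_compl B hsymm hnd W' hW'
  have reg : ∀ U : Submodule ℂ V, IsRegularSubspace B U →
      ∀ x : U, (∀ y, B.restrict U x y = 0) → x = 0 := fun U hU x hx =>
    Subtype.ext (hU x x.2 fun y hy => hx ⟨y, hy⟩)
  obtain ⟨φ, hφ⟩ := aux_isometry (B.restrict W) (B.restrict W') (fun x y => hsymm x y)
    (fun x y => hsymm x y) (reg W hW) (reg W' hW') hd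
  obtain ⟨φ', hφ'⟩ : ∃ φ : W ≃ₗ[ℂ] W', (∀ x y, B (φ x) (φ y) = B x y) ∧
      (φ ⟨h, hhW⟩ : V) = h := by
    by_cases h0 : h = 0
    · refine ⟨φ, fun x y => hφ x y, ?_⟩
      subst h0
      have : (⟨0, hhW⟩ : W) = 0 := rfl
      rw [this, map_zero]
      rfl
    · obtain ⟨τ, ht, hτ⟩ := aux_trans (B.restrict W') (fun x y => hsymm x y) (reg W' hW')
        (φ ⟨h, hhW⟩) ⟨h, hhW'⟩ (by simpa using h0) (by simpa using h0) (hφ _ _)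
      refine ⟨φ.trans τ, fun x y => (ht _ _).trans (hφ x y), ?_⟩
      simp [hτ]
  obtain ⟨ψ, hψ⟩ := aux_isometry (B.restrict (B.orthogonal W)) (B.restrict (B.orthogonal W'))
    (fun x y => hsymm x y) (fun x y => hsymm x y) hn hn' (by
      have h1 := Submodule.finrank_add_eq_of_isCompl hc
      have h2 := Submodule.finrank_add_eq_of_isCompl hc'
      omega)
  obtain ⟨σ, hσ⟩ : ∃ σ : V ≃ₗ[ℂ] V, ∀ (a : W) (b : B.orthogonal W),
      σ (a + b) = φ' a + ψ b := by
    refine ⟨(Submodule.prodEquivOfIsCompl _ _ hc).symm.trans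
      ((φ'.prodCongr ψ).trans (Submodule.prodEquivOfIsCompl _ _ hc')), fun a b => ?_⟩
    have : (a + b : V) = Submodule.prodEquivOfIsCompl _ _ hc (a, b) := by simp
    rw [this, LinearEquiv.trans_apply, LinearEquiv.symm_apply_apply]
    simp
  have hσW : ∀ a : W, σ a = φ' a := fun a => by simpa using hσ a 0
  refine ⟨σ, fun x y => ?_, ?_, ?_⟩
  · have hx : x ∈ W ⊔ B.orthogonal W := by rw [hc.sup_eq_top]; trivial
    have hy : y ∈ W ⊔ B.orthogonal W := by rw [hc.sup_eq_top]; trivial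
    obtain ⟨a, ha, b, hb, rfl⟩ := Submodule.mem_sup.1 hx
    obtain ⟨c, hc, d, hd, rfl⟩ := Submodule.mem_sup.1 hy
    rw [hσ ⟨a, ha⟩ ⟨b, hb⟩, hσ ⟨c, hc⟩ ⟨d, hd⟩]
    have e1 : B a d = 0 := hd a ha
    have e2 : B b c = 0 := by rw [hsymm]; exact hb c hc
    have e3 : B (φ' ⟨a, ha⟩) (ψ ⟨d, hd⟩) = 0 := (ψ ⟨d, hd⟩).2 _ (φ' ⟨a, ha⟩).2
    have e4 : B (ψ ⟨b, hb⟩) (φ' ⟨c, hc⟩) = 0 := by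
      rw [hsymm]; exact (ψ ⟨b, hb⟩).2 _ (φ' ⟨c, hc⟩).2
    have e5 : B (ψ ⟨b, hb⟩) (ψ ⟨d, hd⟩) = B b d := hψ ⟨b, hb⟩ ⟨d, hd⟩
    have e6 := hφ'.1 ⟨a, ha⟩ ⟨c, hc⟩
    simp only [map_add, LinearMap.add_apply, e1, e2, e3, e4, e5, e6]
  · exact (hσW ⟨h, hhW⟩).trans hφ'.2
  · ext z
    constructor
    · rintro ⟨a, ha, rfl⟩
      have := hσW ⟨a, ha⟩
      simp only [LinearEquiv.coe_coe]
      rw [this]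
      exact (φ' ⟨a, ha⟩).2
    · intro hz
      refine ⟨φ'.symm ⟨z, hz⟩, (φ'.symm ⟨z, hz⟩).2, ?_⟩
      simp [hσW]
end

section
/- Fix h ∈ 𝔥. Let 𝔥' and 𝔥'' be regular subspaces of 𝔥 with dim 𝔥' = dim 𝔥'', and set h' = P_{𝔥'}(h) and h'' = P_{𝔥''}(h). Assume h' ∉ {0, h} and h'' ∉ {0, h}. Then there exists σ ∈ O(𝔥) with σ(h) = h, σ(𝔥') = 𝔥'', and σ(h') = h'' if and only if ⟨h',h'⟩ = ⟨h'',h''⟩. -/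
theorem exists_isom_equiv {U₁ U₂ : Type*} [AddCommGroup U₁] [Module ℂ U₁] [FiniteDimensional ℂ U₁]
    [AddCommGroup U₂] [Module ℂ U₂] [FiniteDimensional ℂ U₂]
    (B₁ : LinearMap.BilinForm ℂ U₁) (B₂ : LinearMap.BilinForm ℂ U₂)
    (s₁ : ∀ x y, B₁ x y = B₁ y x) (s₂ : ∀ x y, B₂ x y = B₂ y x)
    (n₁ : ∀ x, (∀ y, B₁ x y = 0) → x = 0) (n₂ : ∀ x, (∀ y, B₂ x y = 0) → x = 0)
    (hd : Module.finrank ℂ U₁ = Module.finrank ℂ U₂) :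
    ∃ f : U₁ ≃ₗ[ℂ] U₂, ∀ x y, B₂ (f x) (f y) = B₁ x y := by
  have key : ∀ (U : Type _) [AddCommGroup U] [Module ℂ U] [FiniteDimensional ℂ U]
      (B : LinearMap.BilinForm ℂ U) (s : ∀ x y, B x y = B y x)
      (n : ∀ x, (∀ y, B x y = 0) → x = 0) (m : ℕ), Module.finrank ℂ U = m →
      QuadraticMap.Equivalent (LinearMap.BilinMap.toQuadraticMap B)
        (QuadraticMap.weightedSumSquares ℂ (1 : Fin m → ℂ)) := by
    rintro U _ _ _ B s n _ rfl
    apply QuadraticForm.equivalent_weightedSumSquares_of_isAlgClosed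
    rw [QuadraticMap.associated_left_inverse ℂ s]
    exact n
  have key' : ∀ (U : Type _) [AddCommGroup U] [Module ℂ U] [FiniteDimensional ℂ U]
      (B : LinearMap.BilinForm ℂ U) (s : ∀ x y, B x y = B y x)
      (n : ∀ x, (∀ y, B x y = 0) → x = 0) (m : ℕ), Module.finrank ℂ U = m →
      QuadraticMap.Equivalent (LinearMap.BilinMap.toQuadraticMap B)
        (QuadraticMap.weightedSumSquares ℂ (1 : Fin m → ℂ)) := by
    rintro U _ _ _ B s n _ rfl
    apply QuadraticForm.equivalent_weightedSumSquares_of_isAlgClosed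
    rw [QuadraticMap.associated_left_inverse ℂ s]
    exact n
  obtain ⟨e⟩ := (key U₁ B₁ s₁ n₁ _ hd).trans (key' U₂ B₂ s₂ n₂ _ rfl).symm
  refine ⟨e.toLinearEquiv, fun x y => ?_⟩
  have h1 := e.map_app (x + y)
  have h2 := e.map_app x
  have h3 := e.map_app y
  change B₂ (e.toLinearEquiv (x+y)) (e.toLinearEquiv (x+y)) = B₁ (x+y) (x+y) at h1
  change B₂ (e.toLinearEquiv x) (e.toLinearEquiv x) = B₁ x x at h2
  change B₂ (e.toLinearEquiv y) (e.toLinearEquiv y) = B₁ y y at h3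
  simp only [map_add, LinearMap.add_apply] at h1
  rw [h2, h3, s₁ y x, s₂ (e.toLinearEquiv y)] at h1
  linear_combination h1 / 2

theorem exists_refl_sub {U : Type*} [AddCommGroup U] [Module ℂ U]
    (B : LinearMap.BilinForm ℂ U) (s : ∀ x y, B x y = B y x)
    (u v : U) (h : B u u = B v v) (hd : B (u - v) (u - v) ≠ 0) :
    ∃ f : U ≃ₗ[ℂ] U, (∀ x y, B (f x) (f y) = B x y) ∧ f u = v := by
  have hf : ((2 / B (u - v) (u - v)) • B (u - v)) (u - v) = 2 := by
    simp only [LinearMap.smul_apply, smul_eq_mul]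
    field_simp
  refine ⟨Module.reflection hf, fun x y => ?_, ?_⟩
  · simp only [Module.reflection_apply]
    generalize u - v = d at *
    simp only [map_sub, LinearMap.sub_apply, map_smul, LinearMap.smul_apply, smul_eq_mul]
    rw [s x d]
    field_simp
    ring
  · have : ((2 / B (u - v) (u - v)) • B (u - v)) u = 1 := by
      simp only [LinearMap.smul_apply, smul_eq_mul]
      rw [div_mul_eq_mul_div, div_eq_one_iff_eq hd]
      simp only [map_sub, LinearMap.sub_apply]
      rw [s v u]
      linear_combination h
    rw [Module.reflection_apply, this]
    simp

theorem exists_isom_trans {U : Type*} [AddCommGroup U] [Module ℂ U]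
    (B : LinearMap.BilinForm ℂ U) (s : ∀ x y, B x y = B y x)
    (n : ∀ x, (∀ y, B x y = 0) → x = 0)
    (u v : U) (h : B u u = B v v) (hu : u ≠ 0) (hv : v ≠ 0) :
    ∃ f : U ≃ₗ[ℂ] U, (∀ x y, B (f x) (f y) = B x y) ∧ f u = v := by
  by_cases h1 : B (u - v) (u - v) ≠ 0
  · exact exists_refl_sub B s u v h h1
  by_cases h2 : B (u - -v) (u - -v) ≠ 0
  · obtain ⟨f, hf, hfu⟩ := exists_refl_sub B s u (-v) (by simpa using h) h2
    refine ⟨f.trans (LinearEquiv.neg ℂ), fun x y => ?_, ?_⟩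
    · simp [hf]
    · simp [hfu]
  push Not at h1 h2
  simp only [map_sub, map_neg, LinearMap.sub_apply, LinearMap.neg_apply] at h1 h2
  rw [s v u] at h1 h2
  have huu : B u u = 0 := by linear_combination (h1 + h2) / 4 + h / 2
  have hvv : B v v = 0 := h ▸ huu
  have huv : B u v = 0 := by linear_combination (h2 - h1) / 4
  have hx : ∃ x, B u x ≠ 0 ∧ B v x ≠ 0 := by
    have ha : ∃ a, B u a ≠ 0 := by
      by_contra! hc
      exact hu (n u hc)
    have hb : ∃ a, B v a ≠ 0 := by
      by_contra! hc
      exact hv (n v hc)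
    obtain ⟨a, ha⟩ := ha
    obtain ⟨b, hb⟩ := hb
    by_cases h3 : B v a = 0
    · by_cases h4 : B u b = 0
      · exact ⟨a + b, by simpa [h4] using ha, by simpa [h3] using hb⟩
      · exact ⟨b, h4, hb⟩
    · exact ⟨a, ha, h3⟩
  obtain ⟨x, hux, hvx⟩ := hx
  obtain ⟨w, hw⟩ : ∃ w, w = x - (B x x / (2 * B u x)) • u := ⟨_, rfl⟩
  have huw : B u w = B u x := by simp [hw, huu]
  have hvw : B v w = B v x := by simp [hw, s v u, huv]
  have hww : B w w = 0 := by
    simp only [hw, map_sub, LinearMap.sub_apply, map_smul, LinearMap.smul_apply, smul_eq_mul, huu,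
      s x u]
    field_simp
    ring
  obtain ⟨f, hf, hfu⟩ := exists_refl_sub B s u w (by rw [huu, hww]) (by
    simp only [map_sub, LinearMap.sub_apply, huu, hww, s w u, huw]
    intro h0
    exact hux (by linear_combination -h0 / 2))
  obtain ⟨g, hg, hgw⟩ := exists_refl_sub B s w v (by rw [hvv, hww]) (by
    simp only [map_sub, LinearMap.sub_apply, hvv, hww, s w v, hvw]
    intro h0
    exact hvx (by linear_combination -h0 / 2))
  exact ⟨f.trans g, fun x y => by simp [hf, hg], by simp [hfu, hgw]⟩

theorem exists_isom_pt {U₁ U₂ : Type*} [AddCommGroup U₁] [Module ℂ U₁] [FiniteDimensional ℂ U₁]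
    [AddCommGroup U₂] [Module ℂ U₂] [FiniteDimensional ℂ U₂]
    (B₁ : LinearMap.BilinForm ℂ U₁) (B₂ : LinearMap.BilinForm ℂ U₂)
    (s₁ : ∀ x y, B₁ x y = B₁ y x) (s₂ : ∀ x y, B₂ x y = B₂ y x)
    (n₁ : ∀ x, (∀ y, B₁ x y = 0) → x = 0) (n₂ : ∀ x, (∀ y, B₂ x y = 0) → x = 0)
    (hd : Module.finrank ℂ U₁ = Module.finrank ℂ U₂)
    (u : U₁) (v : U₂) (hu : u ≠ 0) (hv : v ≠ 0) (h : B₁ u u = B₂ v v) :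
    ∃ f : U₁ ≃ₗ[ℂ] U₂, (∀ x y, B₂ (f x) (f y) = B₁ x y) ∧ f u = v := by
  obtain ⟨f, hf⟩ := exists_isom_equiv B₁ B₂ s₁ s₂ n₁ n₂ hd
  obtain ⟨g, hg, hgv⟩ := exists_isom_trans B₂ s₂ n₂ (f u) v (by rw [hf, h]) (by simpa using hu) hv
  exact ⟨f.trans g, fun x y => by simp [hf, hg], by simp [hgv]⟩

/-- for regular subspaces `𝔥', 𝔥''` of the same dimension with
projections `h' = P_{𝔥'}(h)`, `h'' = P_{𝔥''}(h)` neither `0` nor `h`, some element of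
`O(𝔥)` fixing `h` maps `(𝔥', h')` onto `(𝔥'', h'')` iff `⟨h',h'⟩ = ⟨h'',h''⟩`. -/
theorem stabilizer_orbit_generic_projection
    {V : Type*} [AddCommGroup V] [Module ℂ V] [FiniteDimensional ℂ V]
    (B : LinearMap.BilinForm ℂ V)
    (hsymm : ∀ x y, B x y = B y x) (hnd : B.Nondegenerate)
    (h : V) (W W' : Submodule ℂ V)
    (hW : IsRegularSubspace B W) (hW' : IsRegularSubspace B W')
    (hdim : Module.finrank ℂ W = Module.finrank ℂ W')
    (h' h'' : V) (hp' : IsOrthProj B W h h') (hp'' : IsOrthProj B W' h h'')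
    (hne0' : h' ≠ 0) (hneh' : h' ≠ h) (hne0'' : h'' ≠ 0) (hneh'' : h'' ≠ h) :
    (∃ σ : V ≃ₗ[ℂ] V, (∀ x y, B (σ x) (σ y) = B x y) ∧ σ h = h ∧
        W.map (σ : V →ₗ[ℂ] V) = W' ∧ σ h' = h'') ↔
      B h' h' = B h'' h'' := by
  constructor
  · rintro ⟨σ, h1, -, -, h4⟩
    rw [← h4, h1]
  intro hq
  have hrefl : B.IsRefl := fun x y hxy => by rw [hsymm, hxy]
  have ndr : ∀ X : Submodule ℂ V, IsRegularSubspace B X → (B.restrict X).Nondegenerate := by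
    intro X hX
    refine ⟨fun x hx => Subtype.ext (hX x x.2 fun y hy => hx ⟨y, hy⟩),
      fun x hx => Subtype.ext (hX x x.2 fun y hy => ?_)⟩
    rw [hsymm]
    exact hx ⟨y, hy⟩
  have cW := LinearMap.BilinForm.isCompl_orthogonal_of_restrict_nondegenerate hrefl (ndr W hW)
  have cW' := LinearMap.BilinForm.isCompl_orthogonal_of_restrict_nondegenerate hrefl (ndr W' hW')
  have ort : ∀ X : Submodule ℂ V, ∀ x ∈ X, ∀ y ∈ B.orthogonal X, B x y = 0 :=
    fun X x hx y hy => hy x hx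
  have ndo : ∀ X : Submodule ℂ V, IsCompl X (B.orthogonal X) → ∀ x : B.orthogonal X,
      (∀ y, B.restrict (B.orthogonal X) x y = 0) → x = 0 := by
    intro X hX x hx
    refine Subtype.ext (hnd.1 _ fun z => ?_)
    obtain ⟨⟨a, b⟩, rfl⟩ := (Submodule.prodEquivOfIsCompl _ _ hX).surjective z
    have h2 : B x b = 0 := hx b
    have h3 : B x a = 0 := by rw [hsymm]; exact ort X _ a.2 _ x.2
    simp [h2, h3]
  have memo : ∀ X : Submodule ℂ V, ∀ p, IsOrthProj B X h p → h - p ∈ B.orthogonal X := by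
    intro X p hp x hx
    change B x (h - p) = 0
    rw [hsymm]
    exact hp.2 x hx
  have m' := memo W h' hp'
  have m'' := memo W' h'' hp''
  have norm : ∀ X : Submodule ℂ V, ∀ p, IsOrthProj B X h p →
      B (h - p) (h - p) = B h h - B p p := by
    intro X p hp
    have h1 := hp.2 p hp.1
    have h2 := hsymm p h
    simp only [map_sub, LinearMap.sub_apply] at h1 ⊢
    linear_combination -2 * h1 - h2
  obtain ⟨f, hf, hfh⟩ := exists_isom_pt (B.restrict W) (B.restrict W')
    (fun x y => hsymm x y) (fun x y => hsymm x y) (ndr W hW).1 (ndr W' hW').1 hdim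
    ⟨h', hp'.1⟩ ⟨h'', hp''.1⟩ (fun e => hne0' (congrArg Subtype.val e))
    (fun e => hne0'' (congrArg Subtype.val e)) hq
  obtain ⟨g, hg, hgh⟩ := exists_isom_pt (B.restrict (B.orthogonal W)) (B.restrict (B.orthogonal W'))
    (fun x y => hsymm x y) (fun x y => hsymm x y) (ndo W cW) (ndo W' cW')
    (by rw [LinearMap.BilinForm.finrank_orthogonal hnd, LinearMap.BilinForm.finrank_orthogonal hnd,
      hdim])
    ⟨h - h', m'⟩ ⟨h - h'', m''⟩
    (fun e => hneh' (sub_eq_zero.1 (congrArg Subtype.val e)).symm)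
    (fun e => hneh'' (sub_eq_zero.1 (congrArg Subtype.val e)).symm)
    (by
      change B (h - h') (h - h') = B (h - h'') (h - h'')
      rw [norm W h' hp', norm W' h'' hp'', hq])
  have hf2 : ∀ x y : W, B (f x : V) (f y : V) = B x y := fun x y => hf x y
  have hg2 : ∀ x y : B.orthogonal W, B (g x : V) (g y : V) = B x y := fun x y => hg x y
  let e := Submodule.prodEquivOfIsCompl _ _ cW
  let e' := Submodule.prodEquivOfIsCompl _ _ cW'
  let σ : V ≃ₗ[ℂ] V := (e.symm.trans (f.prodCongr g)).trans e'
  have hσ : ∀ (a : W) (b : B.orthogonal W), σ ((a : V) + b) = (f a : V) + g b := by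
    intro a b
    have : (a : V) + b = e (a, b) := rfl
    rw [this]
    simp only [σ, LinearEquiv.trans_apply, LinearEquiv.symm_apply_apply]
    rfl
  have hσW : ∀ a : W, σ (a : V) = f a := by
    intro a
    simpa using hσ a 0
  have hσh' : σ h' = h'' := by
    have := hσW ⟨h', hp'.1⟩
    rw [hfh] at this
    exact this
  refine ⟨σ, fun x y => ?_, ?_, ?_, hσh'⟩
  · obtain ⟨⟨a, b⟩, rfl⟩ := e.surjective x
    obtain ⟨⟨c, d⟩, rfl⟩ := e.surjective y
    change B (σ ((a : V) + b)) (σ ((c : V) + d)) = B ((a : V) + b) ((c : V) + d)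
    rw [hσ, hσ]
    simp only [map_add, LinearMap.add_apply, hf2, hg2]
    rw [ort W' _ (f a).2 _ (g d).2, ort W _ a.2 _ d.2, hsymm (g b), hsymm b c,
      ort W' _ (f c).2 _ (g b).2, ort W _ c.2 _ b.2]
  · have := hσ ⟨h', hp'.1⟩ ⟨h - h', m'⟩
    rw [hfh, hgh] at this
    simpa using this
  · ext z
    constructor
    · rintro ⟨x, hx, rfl⟩
      have := hσW ⟨x, hx⟩
      change σ x ∈ W'
      rw [show σ x = _ from this]
      exact (f _).2
    · intro hz
      refine ⟨(f.symm ⟨z, hz⟩ : V), (f.symm ⟨z, hz⟩).2, ?_⟩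
      change σ _ = z
      rw [hσW]
      simp
end
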